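/- With the coordinate setup below, under the conformal transformation ḡ_{ij} = α·g_{ij} the transformed fundamental tensor satisfies, at every point of U: F̄_{kij} = (1/3)·(ḡ_{kj}θ̄_i + ḡ_{ki}θ̄_j + g̃̄_{kj}θ̄*_i + g̃̄_{ki}θ̄*_j), where θ̄_i = θ_i + (3/(2α))·Φ_i^s·∂_s α and θ̄*_i = −(1/2)·S_i^s·θ̄_s, with Φ = !![0,1,1; 1,0,1; 1,1,0] and S = !![−1,1,1; 1,−1,1; 1,1,−1]. -/

import Mathlib

open scoped BigOperators

/-- Points of ℝ³. -/
abbrev Pt := Fin 3 → ℝ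

/-- Partial derivative `∂_i f` at `p`. -/
noncomputable def pd (i : Fin 3) (f : Pt → ℝ) (p : Pt) : ℝ :=
  fderiv ℝ f p (Pi.single i 1)

/-- The circulant structure `Q` with `Q¹₂ = Q²₃ = Q³₁ = 1`. -/
def Qmat : Matrix (Fin 3) (Fin 3) ℝ := !![0,1,0; 0,0,1; 1,0,0]

/-- The metric `g_{ij}`: diagonal entries `A`, off-diagonal entries `B`. -/
def gm (A B : Pt → ℝ) (i j : Fin 3) (p : Pt) : ℝ :=
  if i = j then A p else B p

/-- The associated metric `g̃_{ij} = g_{is} Q^s_j + g_{sj} Q^s_i`. -/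
def gt (A B : Pt → ℝ) (i j : Fin 3) (p : Pt) : ℝ :=
  ∑ s, (gm A B i s p * Qmat s j + gm A B s j p * Qmat s i)

/-- Christoffel symbols `Γ^k_{ij}` of a metric `h` with (pointwise) inverse `hinv`. -/
noncomputable def Gamma (h hinv : Fin 3 → Fin 3 → Pt → ℝ) (k i j : Fin 3) (p : Pt) : ℝ :=
  (1/2) * ∑ s, hinv k s p * (pd i (h s j) p + pd j (h s i) p - pd s (h i j) p)

/-- Fundamental tensor `F_{kij} = ∂_k g̃_{ij} − Γ^s_{ki} g̃_{sj} − Γ^s_{kj} g̃_{si}`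
of the metric `h` (with inverse `hinv`) acting on `ht` (= the associated metric). -/
noncomputable def Ften (h hinv ht : Fin 3 → Fin 3 → Pt → ℝ) (k i j : Fin 3) (p : Pt) : ℝ :=
  pd k (ht i j) p - (∑ s, Gamma h hinv s k i p * ht s j p)
    - (∑ s, Gamma h hinv s k j p * ht s i p)

/-- Lee form `θ_k = g^{ij} F_{ijk}`. -/
noncomputable def theta (h hinv ht : Fin 3 → Fin 3 → Pt → ℝ) (k : Fin 3) (p : Pt) : ℝ :=
  ∑ i, ∑ j, hinv i j p * Ften h hinv ht i j k p

/-- Lee form `θ*_k = g^{ij} Q^s_j F_{isk}`. -/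
noncomputable def thetaStar (h hinv ht : Fin 3 → Fin 3 → Pt → ℝ) (k : Fin 3) (p : Pt) : ℝ :=
  ∑ i, ∑ j, ∑ s, hinv i j p * Qmat s j * Ften h hinv ht i s k p

/-- The constant matrix `Φ = !![0,1,1; 1,0,1; 1,1,0]`. -/
def PhiMat : Matrix (Fin 3) (Fin 3) ℝ := !![0,1,1; 1,0,1; 1,1,0]

/-- The constant matrix `S = !![−1,1,1; 1,−1,1; 1,1,−1]`. -/
def Smat : Matrix (Fin 3) (Fin 3) ℝ := !![-1,1,1; 1,-1,1; 1,1,-1]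

lemma aux_inv (a b : ℝ) (h1 : a - b ≠ 0) (h2 : a + 2 * b ≠ 0) (x y z : ℝ) (u v w : ℝ)
    (e1 : a * x + b * y + b * z = u) (e2 : b * x + a * y + b * z = v)
    (e3 : b * x + b * y + a * z = w) :
    x = ((a + b) * u - b * v - b * w) / ((a - b) * (a + 2 * b)) ∧
    y = ((a + b) * v - b * u - b * w) / ((a - b) * (a + 2 * b)) ∧
    z = ((a + b) * w - b * u - b * v) / ((a - b) * (a + 2 * b)) := by
  subst e1 e2 e3
  refine ⟨?_, ?_, ?_⟩ <;> rw [eq_div_iff (mul_ne_zero h1 h2)] <;> ring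

lemma aux_ginv (A B : Pt → ℝ) (p : Pt) (h1 : A p - B p ≠ 0) (h2 : A p + 2 * B p ≠ 0)
    (ginv : Fin 3 → Fin 3 → Pt → ℝ)
    (h : ∀ i j, (∑ s, gm A B i s p * ginv s j p) = if i = j then (1:ℝ) else 0) (i j : Fin 3) :
    ginv i j p = if i = j then (A p + B p) / ((A p - B p) * (A p + 2 * B p))
      else - B p / ((A p - B p) * (A p + 2 * B p)) := by
  have e1 := h 0 j
  have e2 := h 1 j
  have e3 := h 2 j
  simp only [gm, Fin.sum_univ_three] at e1 e2 e3
  simp at e1 e2 e3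
  obtain ⟨q1, q2, q3⟩ := aux_inv _ _ h1 h2 _ _ _ _ _ _ e1 e2 e3
  fin_cases i <;> fin_cases j <;> simp_all

lemma gt_eq (A B : Pt → ℝ) (i j : Fin 3) :
    gt A B i j = if i = j then (fun p => 2 * B p) else (fun p => A p + B p) := by
  funext p
  fin_cases i <;> fin_cases j <;> simp [gt, gm, Qmat, Fin.sum_univ_three] <;> ring

lemma gm_eq (A B : Pt → ℝ) (i j : Fin 3) :
    gm A B i j = if i = j then A else B := by
  funext p
  simp only [gm]; split_ifs <;> rfl

lemma pd_gm (A B : Pt → ℝ) (i j k : Fin 3) (p : Pt) :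
    pd k (gm A B i j) p = if i = j then pd k A p else pd k B p := by
  rw [gm_eq]; split_ifs <;> rfl

lemma pd_gt (A B : Pt → ℝ) (p : Pt) (hA : DifferentiableAt ℝ A p) (hB : DifferentiableAt ℝ B p)
    (i j k : Fin 3) :
    pd k (gt A B i j) p = if i = j then 2 * pd k B p else pd k A p + pd k B p := by
  rw [gt_eq]; split_ifs
  · simp [pd, fderiv_const_mul hB]
  · simp [pd, fderiv_fun_add hA hB]

lemma Ften_eq (A B : Pt → ℝ) (p : Pt) (hA : DifferentiableAt ℝ A p) (hB : DifferentiableAt ℝ B p)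
    (h1 : A p - B p ≠ 0) (h2 : A p + 2 * B p ≠ 0)
    (ginv : Fin 3 → Fin 3 → Pt → ℝ)
    (h : ∀ i j, (∑ s, gm A B i s p * ginv s j p) = if i = j then (1:ℝ) else 0) (k i j : Fin 3) :
    Ften (gm A B) ginv (gt A B) k i j p =
      -(1/2) * (pd i A p + 2 * pd i B p + pd j A p + 2 * pd j B p)
      + (1/2) * ∑ m, ((if k = i then pd m A p else pd m B p)
          + (if k = j then pd m A p else pd m B p)) := by
  have hi := aux_ginv A B p h1 h2 ginv h
  have hg : ∀ i j, gt A B i j p = if i = j then 2 * B p else A p + B p := by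
    intro i j; rw [gt_eq]; split_ifs <;> rfl
  simp only [Ften, Gamma, pd_gm, pd_gt A B p hA hB, hi, hg, Fin.sum_univ_three]
  generalize A p = a at *
  generalize B p = b at *
  fin_cases i <;> fin_cases j <;> fin_cases k <;> simp <;> field_simp <;> ring

lemma theta_eq (A B : Pt → ℝ) (p : Pt) (hA : DifferentiableAt ℝ A p) (hB : DifferentiableAt ℝ B p)
    (h1 : A p - B p ≠ 0) (h2 : A p + 2 * B p ≠ 0)
    (ginv : Fin 3 → Fin 3 → Pt → ℝ)
    (h : ∀ i j, (∑ s, gm A B i s p * ginv s j p) = if i = j then (1:ℝ) else 0) (k : Fin 3) :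
    theta (gm A B) ginv (gt A B) k p =
      -(3/2) * (pd k A p + 2 * pd k B p) / (A p + 2 * B p)
      + ∑ m, ((pd m A p - pd m B p) / (A p - B p)
        + (1/2) * (pd m A p + 2 * pd m B p) / (A p + 2 * B p)) := by
  have hi := aux_ginv A B p h1 h2 ginv h
  simp only [theta, Ften_eq A B p hA hB h1 h2 ginv h, hi, Fin.sum_univ_three]
  generalize A p = a at *
  generalize B p = b at *
  obtain ⟨e, f, rfl, rfl⟩ : ∃ e f, a = (e + 2 * f) / 3 ∧ b = (e - f) / 3 :=
    ⟨a + 2 * b, a - b, by ring, by ring⟩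
  have q1 : (e + 2 * f) / 3 - (e - f) / 3 = f := by ring
  have q2 : (e + 2 * f) / 3 + 2 * ((e - f) / 3) = e := by ring
  simp only [q1, q2] at h1 h2 ⊢
  fin_cases k <;> simp <;> field_simp <;> ring

set_option maxHeartbeats 4000000 in
/-- under the conformal transformation `ḡ = α g`, the transformed
fundamental tensor satisfies
`F̄_{kij} = (1/3)(ḡ_{kj}θ̄_i + ḡ_{ki}θ̄_j + g̃̄_{kj}θ̄*_i + g̃̄_{ki}θ̄*_j)`, where
`θ̄_i = θ_i + (3/(2α)) Φ_i^s ∂_s α` and `θ̄*_i = −(1/2) S_i^s θ̄_s`. -/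
theorem conformal_fundamental_tensor_identity
    (U : Set Pt) (hU : IsOpen U) (A B : Pt → ℝ)
    (hA : ContDiffOn ℝ (⊤ : ℕ∞) A U) (hB : ContDiffOn ℝ (⊤ : ℕ∞) B U)
    (hpos : ∀ p ∈ U, 0 < B p ∧ B p < A p)
    (ginv : Fin 3 → Fin 3 → Pt → ℝ)
    (hginv : ∀ p ∈ U, ∀ i j, (∑ s, gm A B i s p * ginv s j p) = if i = j then (1:ℝ) else 0)
    (α : Pt → ℝ) (hα : ContDiffOn ℝ (⊤ : ℕ∞) α U) (hαpos : ∀ p ∈ U, 0 < α p)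
    -- the conformal metric ḡ_{ij} = α g_{ij}, its associated metric and its inverse
    (gbar gtbar ginvbar : Fin 3 → Fin 3 → Pt → ℝ)
    (hgbar : ∀ i j p, gbar i j p = α p * gm A B i j p)
    (hgtbar : ∀ i j p, gtbar i j p = α p * gt A B i j p)
    (hginvbar : ∀ p ∈ U, ∀ i j, (∑ s, gbar i s p * ginvbar s j p) = if i = j then (1:ℝ) else 0)
    -- the transformed Lee forms
    (θbar θbarStar : Fin 3 → Pt → ℝ)
    (hθbar : ∀ i p, θbar i p = theta (gm A B) ginv (gt A B) i p
        + (3/(2 * α p)) * ∑ s, PhiMat i s * pd s α p)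
    (hθbarStar : ∀ i p, θbarStar i p = -(1/2) * ∑ s, Smat i s * θbar s p) :
    ∀ p ∈ U, ∀ i j k,
      Ften gbar ginvbar gtbar k i j p =
        (1/3) * (gbar k j p * θbar i p + gbar k i p * θbar j p
          + gtbar k j p * θbarStar i p + gtbar k i p * θbarStar j p) := by
  intro p hp
  have dA : DifferentiableAt ℝ A p := (hA.contDiffAt (hU.mem_nhds hp)).differentiableAt (by simp)
  have dB : DifferentiableAt ℝ B p := (hB.contDiffAt (hU.mem_nhds hp)).differentiableAt (by simp)
  have dα : DifferentiableAt ℝ α p := (hα.contDiffAt (hU.mem_nhds hp)).differentiableAt (by simp)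
  obtain ⟨hb, hab⟩ := hpos p hp
  have hα0 : α p ≠ 0 := (hαpos p hp).ne'
  have h1 : A p - B p ≠ 0 := by linarith
  have h2 : A p + 2 * B p ≠ 0 := by linarith
  have hθ := theta_eq A B p dA dB h1 h2 ginv (hginv p hp)
  have eg : gbar = gm (fun q => α q * A q) (fun q => α q * B q) := by
    funext i j q
    rw [hgbar]; simp only [gm]; split_ifs <;> rfl
  have egt : gtbar = gt (fun q => α q * A q) (fun q => α q * B q) := by
    funext i j q
    rw [hgtbar, gt_eq, gt_eq]; split_ifs <;> ring
  have hgb : ∀ i j, gbar i j p = α p * (if i = j then A p else B p) := by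
    intro i j; rw [hgbar]; rfl
  have hgtb : ∀ i j, gtbar i j p = α p * (if i = j then 2 * B p else A p + B p) := by
    intro i j; rw [hgtbar, gt_eq]; split_ifs <;> rfl
  have pA : ∀ i, pd i (fun q => α q * A q) p = α p * pd i A p + A p * pd i α p := by
    intro i; simp [pd, fderiv_fun_mul dα dA]
  have pB : ∀ i, pd i (fun q => α q * B q) p = α p * pd i B p + B p * pd i α p := by
    intro i; simp [pd, fderiv_fun_mul dα dB]
  have hF := Ften_eq (fun q => α q * A q) (fun q => α q * B q) p (dα.mul dA) (dα.mul dB)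
    (by simpa [← mul_sub] using ⟨hα0, h1⟩)
    (by
      have : α p * A p + 2 * (α p * B p) = α p * (A p + 2 * B p) := by ring
      simpa [this] using ⟨hα0, h2⟩)
    ginvbar (by rw [← eg]; exact hginvbar p hp)
  rw [← eg, ← egt] at hF
  intro i j k
  rw [hF]
  simp only [hgb, hgtb, hθbarStar, hθbar, hθ, pA, pB, Fin.sum_univ_three]
  clear hF hgb hgtb pA pB hθ eg egt hθbar hθbarStar hgbar hgtbar hginv hginvbar hpos hαpos
  generalize A p = a at *
  generalize B p = b at *
  generalize α p = c at *
  obtain ⟨e, f, rfl, rfl⟩ : ∃ e f, a = (e + 2 * f) / 3 ∧ b = (e - f) / 3 :=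
    ⟨a + 2 * b, a - b, by ring, by ring⟩
  have q1 : (e + 2 * f) / 3 - (e - f) / 3 = f := by ring
  have q2 : (e + 2 * f) / 3 + 2 * ((e - f) / 3) = e := by ring
  simp only [q1, q2] at h1 h2 ⊢
  fin_cases i <;> fin_cases j <;> fin_cases k <;> simp [PhiMat, Smat] <;> field_simp <;> ring
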